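/- (Ground-state substitution identity (b2.1).) For every smooth compactly supported function u : ℝ^m × ℝ^n → ℝ, ∫ U² |∇_G(u/U)|² dx dt = ∫ |∇_G u|² dx dt − (m(Q-2)/4) ∫ u(x,t)² / ((1 + |x|²/4)² + |t|²) dx dt. -/

import Mathlib

/-!
Write `D = (1 + |x|²/4)² + |t|²` and `β = (Q - 2)/4`, so that `U = D ^ (-β)`. Since
`X_j U / U = -β X_j D / D`, expanding the square gives pointwise
`U² |∇(u/U)|² = |∇u|² + β ∑ X_j(u²) X_jD / D + β² u² |∇D|² / D²`.
Each `X_j` is divergence free, so `∑ X_j (u² X_jD / D)` integrates to zero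
(`integrable_and_integral_Xvf`), and modulo this term the remainder is
`-β u² (ΔD / D - (β + 1) |∇D|² / D²)`.

The H-type condition enters through two explicit formulas: `|∇D|² = |x|² D` (`sum_XD_sq`) and
`ΔD = m (1 + |x|²/4) + (n + 1) |x|²/2` (`sum_XXD`). With `4 (β + 1) = m + 2n + 2` they make the
remainder collapse to `-β m u² / D`, which is the asserted potential term.
-/

open MeasureTheory Real Filter Matrix

noncomputable section

abbrev Pt (m n : ℕ) := (Fin m → ℝ) × (Fin n → ℝ)

def IsHType (m n : ℕ) (A : Fin n → Matrix (Fin m) (Fin m) ℝ) : Prop :=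
  (∀ k, (A k)ᵀ = -(A k)) ∧ (∀ k, A k * (A k)ᵀ = 1) ∧
    ∀ i j, i ≠ j → A i * A j + A j * A i = 0

def Qh (m n : ℕ) : ℝ := m + 2 * n

def Xvf (m n : ℕ) (A : Fin n → Matrix (Fin m) (Fin m) ℝ) (j : Fin m)
    (u : Pt m n → ℝ) (p : Pt m n) : ℝ :=
  fderiv ℝ u p (Pi.single j 1, 0)
    + (1/2) * ∑ k : Fin n, (∑ i : Fin m, A k i j * p.1 i) * fderiv ℝ u p (0, Pi.single k 1)

def gradSq (m n : ℕ) (A : Fin n → Matrix (Fin m) (Fin m) ℝ)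
    (u : Pt m n → ℝ) (p : Pt m n) : ℝ :=
  ∑ j : Fin m, (Xvf m n A j u p) ^ 2

def subLap (m n : ℕ) (A : Fin n → Matrix (Fin m) (Fin m) ℝ)
    (u : Pt m n → ℝ) (p : Pt m n) : ℝ :=
  ∑ j : Fin m, Xvf m n A j (Xvf m n A j u) p

def Uf (m n : ℕ) (p : Pt m n) : ℝ :=
  ((1 + (∑ i, p.1 i ^ 2) / 4) ^ 2 + ∑ r, p.2 r ^ 2) ^ (-(Qh m n - 2) / 4)

def Sconst (m n : ℕ) : ℝ :=
  (4 : ℝ) ^ (-(2 * (n : ℝ)) / Qh m n) * ((m : ℝ) * (Qh m n - 2)) *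
    π ^ (((m : ℝ) + n) / Qh m n) *
    (Real.Gamma (((m : ℝ) + n) / 2) / Real.Gamma ((m : ℝ) + n)) ^ ((2 : ℝ) / Qh m n)

/-! ### Notation and derivatives along the horizontal fields -/

/-- The quantity `(1 + |x|²/4)² + |t|²`. -/
def Df (m n : ℕ) (p : Pt m n) : ℝ :=
  (1 + (∑ i, p.1 i ^ 2) / 4) ^ 2 + ∑ r, p.2 r ^ 2

/-- The vector at `p` along which `X_j` differentiates. -/
def Vf (m n : ℕ) (A : Fin n → Matrix (Fin m) (Fin m) ℝ) (j : Fin m) (p : Pt m n) : Pt m n :=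
  (Pi.single j 1, fun k => (1/2) * (p.1 ᵥ* A k) j)

/-- The closed form of `X_j D`; see `Xvf_Df`. -/
def Gf (m n : ℕ) (A : Fin n → Matrix (Fin m) (Fin m) ℝ) (j : Fin m) (p : Pt m n) : ℝ :=
  (1 + (∑ i, p.1 i ^ 2) / 4) * p.1 j + ∑ k, (p.1 ᵥ* A k) j * p.2 k

section

variable {m n : ℕ} (A : Fin n → Matrix (Fin m) (Fin m) ℝ)

lemma Xvf_eq (j : Fin m) (u : Pt m n → ℝ) (p : Pt m n) :
    Xvf m n A j u p = fderiv ℝ u p (Vf m n A j p) := by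
  have h : Vf m n A j p = (Pi.single j 1, 0)
      + ∑ k, ((1/2) * (p.1 ᵥ* A k) j) • ((0, Pi.single k 1) : Pt m n) := by
    refine Prod.ext ?_ ?_
    · simp [Vf, Prod.fst_sum]
    · ext k
      simp [Vf, Prod.snd_sum, Finset.sum_apply, Pi.single_apply]
  rw [h, map_add, map_sum]
  simp only [map_smul, smul_eq_mul, Xvf, Finset.mul_sum, Matrix.vecMul, dotProduct]
  congr 1
  refine Finset.sum_congr rfl fun k _ => ?_
  simp only [← Finset.mul_sum]
  rw [mul_assoc]
  congr 3
  exact funext fun i => mul_comm (A k i j) (p.1 i)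

lemma Df_pos (p : Pt m n) : 0 < Df m n p := by
  unfold Df; positivity

lemma Uf_eq (p : Pt m n) : Uf m n p = Df m n p ^ (-((Qh m n - 2) / 4)) := by
  unfold Uf Df; congr 1; ring

lemma contDiff_Df : ContDiff ℝ (⊤ : ℕ∞) (Df m n) := by
  unfold Df; fun_prop

lemma contDiff_Gf (j : Fin m) : ContDiff ℝ (⊤ : ℕ∞) (Gf m n A j) := by
  unfold Gf Matrix.vecMul dotProduct; fun_prop

lemma continuous_Vf (j : Fin m) : Continuous (Vf m n A j) := by
  unfold Vf Matrix.vecMul dotProduct; fun_prop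

lemma hasFDerivAt_coord_fst (i : Fin m) (p : Pt m n) :
    HasFDerivAt (fun q : Pt m n => q.1 i)
      ((ContinuousLinearMap.proj (R := ℝ) (φ := fun _ : Fin m => ℝ) i).comp
        (ContinuousLinearMap.fst ℝ (Fin m → ℝ) (Fin n → ℝ))) p :=
  ((ContinuousLinearMap.proj (R := ℝ) (φ := fun _ : Fin m => ℝ) i).comp
    (ContinuousLinearMap.fst ℝ (Fin m → ℝ) (Fin n → ℝ))).hasFDerivAt

lemma hasFDerivAt_coord_snd (k : Fin n) (p : Pt m n) :
    HasFDerivAt (fun q : Pt m n => q.2 k)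
      ((ContinuousLinearMap.proj (R := ℝ) (φ := fun _ : Fin n => ℝ) k).comp
        (ContinuousLinearMap.snd ℝ (Fin m → ℝ) (Fin n → ℝ))) p :=
  ((ContinuousLinearMap.proj (R := ℝ) (φ := fun _ : Fin n => ℝ) k).comp
    (ContinuousLinearMap.snd ℝ (Fin m → ℝ) (Fin n → ℝ))).hasFDerivAt

lemma Xvf_Df (j : Fin m) (p : Pt m n) : Xvf m n A j (Df m n) p = Gf m n A j p := by
  have h1 := HasFDerivAt.fun_sum (u := Finset.univ)
    fun i _ => (hasFDerivAt_coord_fst (m := m) (n := n) i p).pow 2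
  have h2 := HasFDerivAt.fun_sum (u := Finset.univ)
    fun i _ => (hasFDerivAt_coord_snd (m := m) (n := n) i p).pow 2
  have h := (((h1.mul_const (1/4)).const_add 1).pow 2).add h2
  have hD : HasFDerivAt (Df m n) _ p := h.congr_of_eventuallyEq
    (Filter.Eventually.of_forall fun q => by simp [Df, div_eq_mul_inv])
  rw [Xvf_eq, hD.fderiv]
  simp [Vf, Gf, Pi.single_apply, div_eq_mul_inv]
  congr 1
  · ring
  · exact Finset.sum_congr rfl fun k _ => by ring

/-- The closed form of `X_j X_j D`. -/
lemma Xvf_Gf (hA : IsHType m n A) (j : Fin m) (p : Pt m n) :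
    Xvf m n A j (Gf m n A j) p =
      p.1 j ^ 2 / 2 + (1 + (∑ i, p.1 i ^ 2) / 4) + (∑ k, (p.1 ᵥ* A k) j ^ 2) / 2 := by
  have h1 := HasFDerivAt.fun_sum (u := Finset.univ)
    fun i _ => (hasFDerivAt_coord_fst (m := m) (n := n) i p).pow 2
  have h2 := HasFDerivAt.fun_sum (u := Finset.univ) fun k _ =>
    (HasFDerivAt.fun_sum (u := Finset.univ)
      fun i _ => (hasFDerivAt_coord_fst (m := m) (n := n) i p).mul_const (A k i j)).mul
      (hasFDerivAt_coord_snd k p)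
  have h := (((h1.mul_const (1/4)).const_add 1).mul (hasFDerivAt_coord_fst j p)).add h2
  have hD : HasFDerivAt (Gf m n A j) _ p := h.congr_of_eventuallyEq
    (Filter.Eventually.of_forall fun q => by
      simp [Gf, div_eq_mul_inv, Matrix.vecMul, dotProduct])
  -- skew-symmetry kills the diagonal entries of `A k`
  have hdiag : ∀ k, A k j j = 0 := fun k => by
    have := congrFun (congrFun (hA.1 k) j) j
    simp only [Matrix.transpose_apply, Matrix.neg_apply] at this
    linarith
  rw [Xvf_eq, hD.fderiv]
  simp [Vf, Pi.single_apply, div_eq_mul_inv, hdiag]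
  have hs : ∑ k, (∑ i, p.1 i * A k i j) * (2⁻¹ * (p.1 ᵥ* A k) j)
      = (∑ k, (p.1 ᵥ* A k) j ^ 2) * 2⁻¹ := by
    rw [Finset.sum_mul]
    refine Finset.sum_congr rfl fun k _ => ?_
    simp only [Matrix.vecMul, dotProduct]
    ring
  rw [hs]
  ring

/-! ### Consequences of the H-type condition -/

/-- The H-type condition says that `x ᵥ* A k` are orthogonal vectors of length `|x|`. -/
lemma vecMul_dotProduct_vecMul (hA : IsHType m n A) (x : Fin m → ℝ) (k l : Fin n) :
    (x ᵥ* A k) ⬝ᵥ (x ᵥ* A l) = if k = l then x ⬝ᵥ x else 0 := by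
  have key : ∀ k l, (x ᵥ* A k) ⬝ᵥ (x ᵥ* A l) = x ⬝ᵥ ((A k * (A l)ᵀ) *ᵥ x) := fun k l => by
    rw [← Matrix.mulVec_mulVec, Matrix.mulVec_transpose, Matrix.dotProduct_mulVec]
  split_ifs with h
  · subst h
    rw [key, hA.2.1, Matrix.one_mulVec]
  · have h1 := key k l
    have h2 := key l k
    rw [dotProduct_comm] at h2
    have h3 := hA.2.2 k l h
    have h4 : A k * (A l)ᵀ + A l * (A k)ᵀ = 0 := by
      rw [hA.1, hA.1, Matrix.mul_neg, Matrix.mul_neg, ← neg_add, h3, neg_zero]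
    have h5 : x ⬝ᵥ ((A k * (A l)ᵀ) *ᵥ x) + x ⬝ᵥ ((A l * (A k)ᵀ) *ᵥ x) = 0 := by
      rw [← dotProduct_add, ← Matrix.add_mulVec, h4, Matrix.zero_mulVec, dotProduct_zero]
    linarith

lemma dotProduct_vecMul_self (hA : IsHType m n A) (x : Fin m → ℝ) (k : Fin n) :
    x ⬝ᵥ (x ᵥ* A k) = 0 := by
  have h : x ⬝ᵥ (x ᵥ* A k) = - (x ⬝ᵥ (x ᵥ* A k)) := by
    conv_lhs => rw [← Matrix.mulVec_transpose, hA.1, Matrix.neg_mulVec, dotProduct_neg,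
      Matrix.dotProduct_mulVec, dotProduct_comm]
  linarith

lemma sum_XD_sq (hA : IsHType m n A) (p : Pt m n) :
    ∑ j, Gf m n A j p ^ 2 = (∑ i, p.1 i ^ 2) * Df m n p := by
  set a : ℝ := 1 + (∑ i, p.1 i ^ 2) / 4 with ha
  have hG : (fun j => Gf m n A j p) = a • p.1 + ∑ k, p.2 k • (p.1 ᵥ* A k) := by
    ext j
    simp [Gf, Finset.sum_apply, ← ha, mul_comm]
  have hx : p.1 ⬝ᵥ p.1 = ∑ i, p.1 i ^ 2 := by simp [dotProduct, sq]
  have h0 : ∑ j, Gf m n A j p ^ 2 = (fun j => Gf m n A j p) ⬝ᵥ (fun j => Gf m n A j p) := by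
    simp [dotProduct, sq]
  have hc : p.1 ⬝ᵥ (∑ k, p.2 k • (p.1 ᵥ* A k)) = 0 := by
    simp [dotProduct_sum, dotProduct_vecMul_self A hA]
  have hd : (∑ k, p.2 k • (p.1 ᵥ* A k)) ⬝ᵥ (∑ k, p.2 k • (p.1 ᵥ* A k))
      = (∑ r, p.2 r ^ 2) * (p.1 ⬝ᵥ p.1) := by
    simp only [sum_dotProduct, dotProduct_sum, smul_dotProduct, dotProduct_smul,
      vecMul_dotProduct_vecMul A hA]
    simp [Finset.sum_mul, sq, mul_assoc]
  rw [h0, hG]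
  simp only [add_dotProduct, dotProduct_add, hd, smul_dotProduct, dotProduct_smul,
    dotProduct_comm _ p.1, hc, hx, Df, ← ha]
  simp only [smul_eq_mul]
  ring

lemma sum_XXD (hA : IsHType m n A) (p : Pt m n) :
    ∑ j, Xvf m n A j (Gf m n A j) p
      = m * (1 + (∑ i, p.1 i ^ 2) / 4) + (n + 1) * (∑ i, p.1 i ^ 2) / 2 := by
  have hk : ∀ k, ∑ j, (p.1 ᵥ* A k) j ^ 2 = ∑ i, p.1 i ^ 2 := fun k => by
    have := vecMul_dotProduct_vecMul A hA p.1 k k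
    simpa [dotProduct, sq] using this
  have hc : ∑ j, ∑ k, (p.1 ᵥ* A k) j ^ 2 = n * ∑ i, p.1 i ^ 2 := by
    rw [Finset.sum_comm]
    simp [hk]
  simp only [Xvf_Gf A hA, Finset.sum_add_distrib, ← Finset.sum_div, hc, Finset.sum_const, Finset.card_univ, Fintype.card_fin, nsmul_eq_mul]
  ring

/-! ### Horizontal fields are divergence free -/

lemma continuous_Xvf (j : Fin m) {f : Pt m n → ℝ} (hf : ContDiff ℝ 1 f) :
    Continuous (Xvf m n A j f) := by
  rw [funext (Xvf_eq A j f)]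
  exact (hf.continuous_fderiv (by simp)).clm_apply (continuous_Vf A j)

lemma hasCompactSupport_Xvf (j : Fin m) {f : Pt m n → ℝ} (hf : HasCompactSupport f) :
    HasCompactSupport (Xvf m n A j f) := by
  refine (hf.fderiv (𝕜 := ℝ)).mono fun p hp h => hp ?_
  rw [Xvf_eq, h]; rfl

/-- The integral of `X_j f` vanishes, because the `t`-coefficients of `X_j` depend on `x` only. -/
lemma integrable_and_integral_Xvf (j : Fin m) {f : Pt m n → ℝ} (hf : ContDiff ℝ 1 f)
    (hs : HasCompactSupport f) :
    Integrable (Xvf m n A j f) ∧ ∫ p, Xvf m n A j f p = 0 := by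
  refine ⟨(continuous_Xvf A j hf).integrable_of_hasCompactSupport
    (hasCompactSupport_Xvf A j hs), ?_⟩
  have hcd : ∀ v, Continuous fun p => fderiv ℝ f p v := fun v =>
    (hf.continuous_fderiv (by simp)).clm_apply continuous_const
  have hsd : ∀ v, HasCompactSupport fun p => fderiv ℝ f p v := fun v =>
    (hs.fderiv (𝕜 := ℝ)).mono fun p hp h => hp (by simp [h])
  have hfd : Differentiable ℝ f := hf.differentiable (by simp)
  have : (volume : Measure (Pt m n)).IsAddHaarMeasure := by
    have h1 : (volume : Measure (Fin m → ℝ)).IsAddHaarMeasure := inferInstance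
    have h2 : (volume : Measure (Fin n → ℝ)).IsAddHaarMeasure := inferInstance
    exact Measure.prod.instIsAddHaarMeasure _ _
  -- integration by parts against a coefficient that is constant in the direction `v`
  have key : ∀ (c : Pt m n → ℝ) (v : Pt m n), ContDiff ℝ 1 c → (∀ p, fderiv ℝ c p v = 0) →
      Integrable (fun p => c p * fderiv ℝ f p v) ∧ ∫ p, c p * fderiv ℝ f p v = 0 := by
    intro c v hc hcv
    have hi : Integrable (fun p => c p * fderiv ℝ f p v) :=
      (hc.continuous.mul (hcd v)).integrable_of_hasCompactSupport ((hsd v).mul_left)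
    refine ⟨hi, ?_⟩
    rw [integral_mul_fderiv_eq_neg_fderiv_mul_of_integrable (by simp [hcv]) hi
      ((hc.continuous.mul hf.continuous).integrable_of_hasCompactSupport hs.mul_left)
      (fun p _ => hc.differentiable (by simp) p) (fun p _ => hfd p)]
    simp [hcv]
  have k1 := key (fun _ => 1) (Pi.single j 1, 0) contDiff_const (by simp)
  have k2 := fun k => key (fun p => ∑ i, A k i j * p.1 i) (0, Pi.single k 1) (by fun_prop)
    (fun p => by
      have h := HasFDerivAt.fun_sum (u := Finset.univ)
        fun i _ => (hasFDerivAt_coord_fst (m := m) (n := n) i p).const_mul (A k i j)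
      rw [h.fderiv]
      simp)
  simp only [one_mul] at k1
  unfold Xvf
  rw [integral_add k1.1 ((integrable_finsetSum _ fun k _ => (k2 k).1).const_mul _), k1.2,
    integral_const_mul, integral_finsetSum _ fun k _ => (k2 k).1]
  simp [fun k => (k2 k).2]

/-! ### The substitution identity -/

/-- The pointwise form of the identity: the integrands differ by the divergence of the
horizontal field with components `u² X_jD / D`, up to the factor `β = (Q - 2)/4`. -/
lemma pointwise_identity (hA : IsHType m n A) {u : Pt m n → ℝ} (hu : Differentiable ℝ u)
    (p : Pt m n) :
    Uf m n p ^ 2 * gradSq m n A (fun q => u q / Uf m n q) p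
      = gradSq m n A u p
        + (Qh m n - 2) / 4 * ∑ j, Xvf m n A j (fun q => u q ^ 2 * (Gf m n A j q / Df m n q)) p
        - (m : ℝ) * (Qh m n - 2) / 4 * (u p ^ 2 / Df m n p) := by
  set β : ℝ := (Qh m n - 2) / 4 with hβ
  have hD0 := Df_pos p
  have hD := ((contDiff_Df (m := m) (n := n)).differentiable (by simp) p).hasFDerivAt
  have hu' := (hu p).hasFDerivAt
  have h1 : ∀ j, Uf m n p * Xvf m n A j (fun q => u q / Uf m n q) p
      = Xvf m n A j u p + β * u p * (Gf m n A j p / Df m n p) := by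
    intro j
    have hq : (fun q => u q / Uf m n q) = fun q => u q * Df m n q ^ β := by
      ext q
      rw [Uf_eq, ← hβ, Real.rpow_neg (Df_pos q).le, div_inv_eq_mul]
    have hd := hu'.mul (hD.rpow_const (p := β) (Or.inl hD0.ne'))
    rw [hq, Xvf_eq, HasFDerivAt.fderiv (f := fun q => u q * Df m n q ^ β) hd, ← Xvf_Df,
      Xvf_eq, Xvf_eq, Uf_eq, ← hβ, Real.rpow_neg hD0.le, Real.rpow_sub_one hD0.ne']
    have := (Real.rpow_pos_of_pos hD0 β).ne'
    simp
    field_simp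
    ring
  have h2 : ∀ j, Xvf m n A j (fun q => u q ^ 2 * (Gf m n A j q / Df m n q)) p
      = 2 * u p * Xvf m n A j u p * (Gf m n A j p / Df m n p)
        + u p ^ 2 * (Xvf m n A j (Gf m n A j) p / Df m n p)
        - u p ^ 2 * (Gf m n A j p ^ 2 / Df m n p ^ 2) := by
    intro j
    have hG := ((contDiff_Gf A j).differentiable (by simp) p).hasFDerivAt
    have hd := ((hu'.pow 2).mul (hG.mul
      ((hasDerivAt_inv hD0.ne').comp_hasFDerivAt p hD))).congr_of_eventuallyEq
      (f₁ := fun q => u q ^ 2 * (Gf m n A j q / Df m n q))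
      (Filter.Eventually.of_forall fun q => by simp [div_eq_mul_inv])
    have hX := Xvf_Df A j p
    rw [Xvf_eq] at hX
    rw [Xvf_eq, hd.fderiv,
      Xvf_eq, Xvf_eq]
    simp [hX]
    field_simp
    ring
  have h3 : ∀ j, (Uf m n p * Xvf m n A j (fun q => u q / Uf m n q) p) ^ 2
      = Xvf m n A j u p ^ 2
        + β * Xvf m n A j (fun q => u q ^ 2 * (Gf m n A j q / Df m n q)) p
        - β * u p ^ 2 / Df m n p * Xvf m n A j (Gf m n A j) p
        + β * (β + 1) * u p ^ 2 / Df m n p ^ 2 * Gf m n A j p ^ 2 := by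
    intro j
    rw [h1, h2]
    field_simp
    ring
  unfold gradSq
  rw [Finset.mul_sum]
  simp only [← mul_pow, h3]
  rw [Finset.sum_add_distrib, Finset.sum_sub_distrib, Finset.sum_add_distrib, ← Finset.mul_sum,
    ← Finset.mul_sum, ← Finset.mul_sum, sum_XXD A hA, sum_XD_sq A hA]
  simp only [hβ, Qh]
  field_simp
  ring

end

/-- **Ground-state substitution identity (b2.1)**:
`∫ U² |∇_G(u/U)|² = ∫ |∇_G u|² − (m(Q-2)/4) ∫ u²/((1+|x|²/4)²+|t|²)`. -/
theorem ground_state_substitution (m n : ℕ) (hm : 1 ≤ m) (hn : 1 ≤ n)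
    (A : Fin n → Matrix (Fin m) (Fin m) ℝ) (hA : IsHType m n A)
    (u : Pt m n → ℝ) (hu : ContDiff ℝ (⊤ : ℕ∞) u) (hsupp : HasCompactSupport u) :
    ∫ p : Pt m n, Uf m n p ^ 2 * gradSq m n A (fun q => u q / Uf m n q) p
      = (∫ p : Pt m n, gradSq m n A u p)
        - ((m : ℝ) * (Qh m n - 2) / 4) *
            ∫ p : Pt m n, u p ^ 2 / ((1 + (∑ i, p.1 i ^ 2) / 4) ^ 2 + ∑ r, p.2 r ^ 2) := by
  change _ = _ - _ * ∫ p : Pt m n, u p ^ 2 / Df m n p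
  have hu1 : ContDiff ℝ 1 u := hu.of_le (by exact_mod_cast le_top)
  have hs2 : HasCompactSupport fun p => u p ^ 2 :=
    hsupp.mono fun p hp h => hp (by simp [h])
  have hI1 : Integrable (gradSq m n A u) := by
    refine Continuous.integrable_of_hasCompactSupport
      (continuous_finsetSum _ fun j _ => (continuous_Xvf A j hu1).pow 2) ?_
    refine (hsupp.fderiv (𝕜 := ℝ)).mono fun p hp h => hp ?_
    simp [gradSq, Xvf_eq, h]
  have hI2 : Integrable fun p => u p ^ 2 / Df m n p := by
    refine Continuous.integrable_of_hasCompactSupport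
      ((hu.continuous.pow 2).div contDiff_Df.continuous fun p => (Df_pos p).ne') ?_
    exact hs2.mono fun p hp h => hp (by simp at h; simp [h])
  have hX : ∀ j, _ := fun j => integrable_and_integral_Xvf A j
    (f := fun q => u q ^ 2 * (Gf m n A j q / Df m n q))
    (((hu.pow 2).mul ((contDiff_Gf A j).div contDiff_Df fun p => (Df_pos p).ne')).of_le
      (by exact_mod_cast le_top)) hs2.mul_right
  have hI3 := (integrable_finsetSum Finset.univ fun j _ => (hX j).1).const_mul
    ((Qh m n - 2) / 4)
  simp only [pointwise_identity A hA (hu1.differentiable (by simp))]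
  have hI4 := hI1.add hI3
  simp only [Pi.add_def] at hI4
  rw [integral_sub hI4 (hI2.const_mul _), integral_add hI1 hI3, integral_const_mul,
    integral_const_mul, integral_finsetSum _ fun j _ => (hX j).1]
  simp [fun j => (hX j).2]
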